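/- arXiv:1809.02720 — 2 statements merged into one kernel-verified Lean document; each statement's English description precedes it below -/
import Mathlib

section
/- Let α > 0 be irrational and set C = ℕ ∪ { −α·m : m ∈ ℕ } ⊆ ℝ. Then: (i) for every a > 0, the set C ∩ [−a, a] is finite, and in particular dim_B^-(C ∩ [−a,a]) = 0 for all a > 0; but (ii) the Minkowski sum C + C does not have zero lower box-counting dimension; in fact dim_B^-((C + C) ∩ [0,1]) = 1. -/
open Set Filter Pointwise

/-- `coverN ε S` is the minimal number of intervals of length `ε` needed to cover `S`. -/
noncomputable def coverN (ε : ℝ) (S : Set ℝ) : ℕ :=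
  sInf {n : ℕ | ∃ f : Fin n → ℝ, S ⊆ ⋃ i, Icc (f i) (f i + ε)}

/-- The lower box-counting dimension of a set `S ⊆ ℝ`. -/
noncomputable def lowerBoxDim (S : Set ℝ) : ℝ :=
  liminf (fun ε : ℝ => Real.log (coverN ε S) / Real.log ε⁻¹) (nhdsWithin 0 (Ioi 0))

/-!
The set `C` is a union of two discrete rays, so it meets every bounded interval in finitely many
points. Its sumset, however, contains every positive number of the form `n - α m` with `n ∈ ℤ` and
`m ∈ ℕ`, and since the forward orbit of the rotation by `-α` is dense in `ℝ / ℤ`, these numbers are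
dense in `[0, ∞)`. Finitely many closed intervals covering a set also cover its closure, so a
covering of `(C + C) ∩ [0, 1]` by intervals of length `ε` covers `(0, 1)` and therefore needs at
least `1 / ε` of them.
-/

open Asymptotics Bornology MeasureTheory Topology

section Log

variable {ι : Type*} {l : Filter ι} {f g : ι → ℝ}

theorem isBigO_log_sub_log_of_isTheta (h : f =Θ[l] g) :
    (fun i => Real.log (f i) - Real.log (g i)) =O[l] fun _ => (1 : ℝ) := by
  obtain ⟨c, hc, hfg⟩ := h.1.exists_pos
  obtain ⟨d, hd, hgf⟩ := h.2.exists_pos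
  refine .of_bound (|Real.log c| + |Real.log d|) ?_
  filter_upwards [hfg.bound, hgf.bound] with i hfg hgf
  simp only [Real.norm_eq_abs] at hfg hgf
  rcases eq_or_ne (g i) 0 with hg | hg
  · have hf : f i = 0 := by simpa [hg] using hfg
    simp only [hf, hg, sub_self, norm_zero]
    positivity
  · have hf : f i ≠ 0 := fun hf => hg (by simpa [hf] using hgf)
    have hle := Real.log_le_log (abs_pos.2 hf) hfg
    have hge := Real.log_le_log (abs_pos.2 hg) hgf
    rw [Real.log_mul hc.ne' (abs_ne_zero.2 hg), Real.log_abs, Real.log_abs] at hle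
    rw [Real.log_mul hd.ne' (abs_ne_zero.2 hf), Real.log_abs, Real.log_abs] at hge
    rw [norm_one, mul_one, Real.norm_eq_abs, abs_le]
    constructor <;>
      linarith [le_abs_self (Real.log c), le_abs_self (Real.log d), abs_nonneg (Real.log c),
        abs_nonneg (Real.log d)]

theorem tendsto_log_div_log_of_isTheta_rpow {s : ℝ} (h : f =Θ[l] fun i => g i ^ s)
    (hg : Tendsto g l atTop) :
    Tendsto (fun i => Real.log (f i) / Real.log (g i)) l (𝓝 s) := by
  have hlog : Tendsto (fun i => Real.log (g i)) l atTop := Real.tendsto_log_atTop.comp hg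
  have herr : (fun i => Real.log (f i) - Real.log (g i ^ s)) =o[l] fun i => Real.log (g i) :=
    (isBigO_log_sub_log_of_isTheta h).trans_isLittleO
      (isLittleO_const_left.2 <| .inr <| tendsto_norm_atTop_atTop.comp hlog)
  have hlim := herr.tendsto_div_nhds_zero.add_const s
  rw [zero_add] at hlim
  refine hlim.congr' ?_
  filter_upwards [hg.eventually_gt_atTop 0, hlog.eventually_gt_atTop 0] with i hi hlogi
  rw [Real.log_rpow hi]
  field_simp
  ring

end Log

section CoverN

variable {ε : ℝ} {S : Set ℝ}

theorem coverN_le {n : ℕ} {f : Fin n → ℝ} (hf : S ⊆ ⋃ i, Icc (f i) (f i + ε)) :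
    coverN ε S ≤ n :=
  Nat.sInf_le ⟨f, hf⟩

theorem coverN_empty (ε : ℝ) : coverN ε ∅ = 0 :=
  Nat.le_zero.1 (coverN_le (f := Fin.elim0) (empty_subset _))

theorem coverN_closure (ε : ℝ) (S : Set ℝ) : coverN ε (closure S) = coverN ε S := by
  have hclosed {n : ℕ} (f : Fin n → ℝ) : IsClosed (⋃ i, Icc (f i) (f i + ε)) :=
    isClosed_iUnion_of_finite fun _ => isClosed_Icc
  simp only [coverN, (hclosed _).closure_subset_iff]

theorem coverN_le_ncard (hε : 0 ≤ ε) (hS : S.Finite) : coverN ε S ≤ S.ncard := by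
  have := hS.to_subtype
  refine coverN_le (f := fun i => ((Finite.equivFin S).symm i : ℝ)) fun x hx => ?_
  exact mem_iUnion.2 ⟨Finite.equivFin S ⟨x, hx⟩, by
    simpa only [Equiv.symm_apply_apply] using left_mem_Icc.2 (le_add_of_nonneg_right hε)⟩

theorem exists_Icc_subset_iUnion_Icc (hε : 0 < ε) (a b : ℝ) :
    ∃ f : Fin (⌊(b - a) / ε⌋₊ + 1) → ℝ, Icc a b ⊆ ⋃ i, Icc (f i) (f i + ε) := by
  refine ⟨fun i => a + (i : ℕ) * ε, fun x ⟨hax, hxb⟩ => ?_⟩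
  have hle : (⌊(x - a) / ε⌋₊ : ℝ) * ε ≤ x - a :=
    (le_div_iff₀ hε).1 (Nat.floor_le (div_nonneg (sub_nonneg.2 hax) hε.le))
  have hlt : x - a < (⌊(x - a) / ε⌋₊ + 1) * ε :=
    (div_lt_iff₀ hε).1 (Nat.lt_floor_add_one _)
  have hindex : ⌊(x - a) / ε⌋₊ < ⌊(b - a) / ε⌋₊ + 1 :=
    Nat.lt_succ_of_le (Nat.floor_mono (by gcongr))
  refine mem_iUnion.2 ⟨⟨_, hindex⟩, ?_, ?_⟩ <;> dsimp only <;> linarith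

theorem coverN_le_of_subset_Icc (hε : 0 < ε) {a b : ℝ} (hS : S ⊆ Icc a b) :
    coverN ε S ≤ ⌊(b - a) / ε⌋₊ + 1 :=
  let ⟨_, hf⟩ := exists_Icc_subset_iUnion_Icc hε a b
  coverN_le (hS.trans hf)

theorem exists_subset_iUnion_Icc_coverN (hε : 0 < ε) (hS : IsBounded S) :
    ∃ f : Fin (coverN ε S) → ℝ, S ⊆ ⋃ i, Icc (f i) (f i + ε) := by
  obtain ⟨f, hf⟩ := exists_Icc_subset_iUnion_Icc hε (sInf S) (sSup S)
  exact Nat.sInf_mem (s := {n : ℕ | ∃ f : Fin n → ℝ, S ⊆ ⋃ i, Icc (f i) (f i + ε)})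
    ⟨_, f, hS.subset_Icc_sInf_sSup.trans hf⟩

theorem coverN_pos (hε : 0 < ε) (hS : IsBounded S) (hne : S.Nonempty) : 0 < coverN ε S := by
  obtain ⟨f, hf⟩ := exists_subset_iUnion_Icc_coverN hε hS
  obtain ⟨i, -⟩ := mem_iUnion.1 (hf hne.some_mem)
  exact i.pos

theorem volume_le_coverN_mul (hε : 0 < ε) (hS : IsBounded S) :
    volume S ≤ coverN ε S * ENNReal.ofReal ε := by
  obtain ⟨f, hf⟩ := exists_subset_iUnion_Icc_coverN hε hS
  calc
    volume S ≤ ∑ i, volume (Icc (f i) (f i + ε)) :=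
      (measure_mono hf).trans (measure_iUnion_fintype_le _ _)
    _ = coverN ε S * ENNReal.ofReal ε := by simp

theorem isBigO_coverN_inv (hS : IsBounded S) :
    (fun ε => (coverN ε S : ℝ)) =O[𝓝[>] 0] fun ε => ε⁻¹ := by
  obtain ⟨r, hr, hSr⟩ := hS.subset_closedBall_lt 0 0
  rw [Real.closedBall_eq_Icc, zero_sub, zero_add] at hSr
  refine .of_bound (2 * r + 1) ?_
  filter_upwards [Ioo_mem_nhdsGT one_pos] with ε ⟨hε, hε_lt⟩
  rw [Real.norm_natCast, Real.norm_of_nonneg (inv_nonneg.2 hε.le)]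
  calc
    (coverN ε S : ℝ) ≤ ⌊(r - -r) / ε⌋₊ + 1 := mod_cast coverN_le_of_subset_Icc hε hSr
    _ ≤ (r - -r) / ε + ε⁻¹ :=
      add_le_add (Nat.floor_le (div_nonneg (by linarith) hε.le)) ((one_le_inv₀ hε).2 hε_lt.le)
    _ = (2 * r + 1) * ε⁻¹ := by ring

theorem isBigO_inv_coverN (hS : IsBounded S) (hvol : volume S ≠ 0) :
    (fun ε => ε⁻¹) =O[𝓝[>] 0] fun ε => (coverN ε S : ℝ) := by
  have hpos : 0 < volume.real S := ENNReal.toReal_pos hvol hS.measure_lt_top.ne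
  refine .of_bound (volume.real S)⁻¹ ?_
  filter_upwards [self_mem_nhdsWithin] with ε (hε : 0 < ε)
  have hle : volume.real S ≤ coverN ε S * ε := by
    refine ENNReal.toReal_le_of_le_ofReal (by positivity) ?_
    rw [ENNReal.ofReal_mul (Nat.cast_nonneg _), ENNReal.ofReal_natCast]
    exact volume_le_coverN_mul hε hS
  rw [Real.norm_natCast, Real.norm_of_nonneg (inv_nonneg.2 hε.le), inv_mul_eq_div,
    le_div_iff₀ hpos, inv_mul_le_iff₀ hε, mul_comm]
  exact hle

end CoverN

section LowerBoxDim

variable {S : Set ℝ}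

theorem lowerBoxDim_eq_of_isTheta {s : ℝ}
    (h : (fun ε => (coverN ε S : ℝ)) =Θ[𝓝[>] 0] fun ε => ε⁻¹ ^ s) : lowerBoxDim S = s :=
  (tendsto_log_div_log_of_isTheta_rpow h tendsto_inv_nhdsGT_zero).liminf_eq

theorem lowerBoxDim_closure (S : Set ℝ) : lowerBoxDim (closure S) = lowerBoxDim S := by
  simp only [lowerBoxDim, coverN_closure]

theorem lowerBoxDim_empty : lowerBoxDim ∅ = 0 := by
  simp only [lowerBoxDim, coverN_empty, Nat.cast_zero, Real.log_zero, zero_div, liminf_const]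

theorem lowerBoxDim_eq_zero_of_finite (hS : S.Finite) : lowerBoxDim S = 0 := by
  rcases S.eq_empty_or_nonempty with rfl | hne
  · exact lowerBoxDim_empty
  refine lowerBoxDim_eq_of_isTheta ?_
  simp only [Real.rpow_zero]
  refine ⟨.of_bound S.ncard ?_, .of_bound 1 ?_⟩ <;>
    filter_upwards [self_mem_nhdsWithin] with ε (hε : 0 < ε) <;>
    rw [norm_one, Real.norm_natCast]
  · exact mod_cast (coverN_le_ncard hε.le hS).trans_eq (mul_one _).symm
  · exact mod_cast (coverN_pos hε hS.isBounded hne).trans_eq (one_mul _).symm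

theorem lowerBoxDim_eq_one_of_volume_ne_zero (hS : IsBounded S) (hvol : volume S ≠ 0) :
    lowerBoxDim S = 1 := by
  refine lowerBoxDim_eq_of_isTheta ?_
  simp only [Real.rpow_one]
  exact ⟨isBigO_coverN_inv hS, isBigO_inv_coverN hS hvol⟩

theorem lowerBoxDim_eq_one_of_nonempty_interior_closure (hS : IsBounded S)
    (hint : (interior (closure S)).Nonempty) : lowerBoxDim S = 1 := by
  rw [← lowerBoxDim_closure]
  exact lowerBoxDim_eq_one_of_volume_ne_zero hS.closure
    (Measure.measure_pos_of_nonempty_interior volume hint).ne'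

end LowerBoxDim

theorem finite_range_inter_of_isClosedEmbedding {X Y : Type*} [TopologicalSpace X]
    [DiscreteTopology X] [TopologicalSpace Y] {f : X → Y} (hf : IsClosedEmbedding f) {K : Set Y}
    (hK : IsCompact K) : (range f ∩ K).Finite := by
  rw [inter_comm, ← image_preimage_eq_inter_range]
  exact (hf.isCompact_preimage hK).finite_of_discrete.image f

theorem dense_setOf_intCast_add_natCast_mul {a : ℝ} (ha : Irrational a) :
    Dense {x : ℝ | ∃ (k : ℤ) (m : ℕ), x = k + m * a} := by
  have horbit : DenseRange fun m : ℕ => m • (a : UnitAddCircle) :=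
    denseRange_zsmul_iff_nsmul.1 (AddCircle.denseRange_zsmul_coe_iff.2 (by rwa [div_one]))
  refine (QuotientAddGroup.dense_preimage_mk.2 horbit).mono ?_
  rintro x ⟨m, hm⟩
  have hzero : ((x - m * a : ℝ) : UnitAddCircle) = 0 := by
    rw [AddCircle.coe_sub, ← nsmul_eq_mul, AddCircle.coe_nsmul]
    exact sub_eq_zero.2 hm.symm
  obtain ⟨k, hk⟩ := (AddCircle.coe_eq_zero_iff 1).1 hzero
  exact ⟨k, m, by simpa only [zsmul_one, eq_sub_iff_add_eq, eq_comm] using hk⟩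

theorem Ioi_zero_subset_closure_range_natCast_add_range_mul {a : ℝ} (ha : Irrational a)
    (hneg : a < 0) :
    Ioi 0 ⊆ closure (range ((↑) : ℕ → ℝ) + range fun m : ℕ => a * (m : ℝ)) := by
  refine ((dense_setOf_intCast_add_natCast_mul ha).open_subset_closure_inter isOpen_Ioi).trans
    (closure_mono ?_)
  rintro _ ⟨hpos : (0 : ℝ) < _, k, m, rfl⟩
  have hk : (0 : ℝ) < k := by linarith [mul_nonpos_of_nonneg_of_nonpos m.cast_nonneg hneg.le]
  lift k to ℕ using mod_cast hk.le
  exact ⟨k, mem_range_self k, a * m, mem_range_self m, by push_cast; ring⟩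

theorem stmt10 (α : ℝ) (hα : Irrational α) (hpos : 0 < α)
    (C : Set ℝ) (hC : C = {x : ℝ | ∃ n : ℕ, x = (n : ℝ)} ∪ {x : ℝ | ∃ m : ℕ, x = -α * (m : ℝ)}) :
    (∀ a : ℝ, 0 < a → (C ∩ Icc (-a) a).Finite) ∧
    (∀ a : ℝ, 0 < a → lowerBoxDim (C ∩ Icc (-a) a) = 0) ∧
    lowerBoxDim ((C + C) ∩ Icc 0 1) = 1 := by
  have hC_range : C = range ((↑) : ℕ → ℝ) ∪ range fun m : ℕ => -α * (m : ℝ) := by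
    simp only [hC, range, eq_comm]
  have hfinite (a : ℝ) : (C ∩ Icc (-a) a).Finite := by
    have hnat := Nat.isClosedEmbedding_coe_real
    have hmul := (Homeomorph.mulLeft₀ (-α) (neg_ne_zero.2 hpos.ne')).isClosedEmbedding.comp hnat
    rw [hC_range, union_inter_distrib_right]
    exact (finite_range_inter_of_isClosedEmbedding hnat isCompact_Icc).union
      (finite_range_inter_of_isClosedEmbedding hmul isCompact_Icc)
  have hdense : Ioi 0 ⊆ closure (C + C) :=
    (Ioi_zero_subset_closure_range_natCast_add_range_mul hα.neg (neg_lt_zero.2 hpos)).trans <|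
      closure_mono <| hC_range ▸ add_subset_add subset_union_left subset_union_right
  have hIoo : Ioo 0 1 ⊆ closure ((C + C) ∩ Icc 0 1) :=
    calc
      Ioo 0 1 ⊆ closure (C + C) ∩ Ioo 0 1 := subset_inter (Ioo_subset_Ioi_self.trans hdense) le_rfl
      _ ⊆ closure ((C + C) ∩ Ioo 0 1) := isOpen_Ioo.closure_inter
      _ ⊆ closure ((C + C) ∩ Icc 0 1) := by gcongr; exact Ioo_subset_Icc_self
  exact ⟨fun a _ => hfinite a, fun a _ => lowerBoxDim_eq_zero_of_finite (hfinite a),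
    lowerBoxDim_eq_one_of_nonempty_interior_closure
      ((Metric.isBounded_Icc 0 1).subset inter_subset_right)
      ((nonempty_Ioo.2 one_pos).mono (isOpen_Ioo.subset_interior_iff.2 hIoo))⟩
end

section
/- Let H be a complex Hilbert space and let A, B be bounded self-adjoint operators on H. Then every point of the spectrum of A lies within distance ‖A − B‖ of the spectrum of B: for all z ∈ σ(A), dist(z, σ(B)) ≤ ‖A − B‖. -/
/-!
If `z ∉ σ(b)`, then `z - a = (z - b) * (1 - R * (a - b))`, where `R = (z - b)⁻¹` is the resolvent.
When `z ∈ σ(a)` the last factor is not invertible, so the Neumann series forces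
`1 ≤ ‖R * (a - b)‖`; the functional calculus of `b` gives `‖R‖ ≤ 1 / dist(z, σ(b))`.
-/

lemma algebraMap_sub_eq_mul_one_sub_resolvent_mul {R A : Type*} [CommSemiring R] [Ring A]
    [Algebra R A] (a : A) {b : A} {z : R} (hz : z ∉ spectrum R b) :
    algebraMap R A z - a = (algebraMap R A z - b) * (1 - resolvent b z * (a - b)) := by
  have mul_resolvent : (algebraMap R A z - b) * resolvent b z = 1 :=
    Ring.mul_inverse_cancel _ (spectrum.notMem_iff.mp hz)
  rw [mul_sub, mul_one, ← mul_assoc, mul_resolvent, one_mul, sub_sub_sub_cancel_right]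

lemma one_le_norm_resolvent_mul_sub {R A : Type*} [CommSemiring R] [NormedRing A]
    [HasSummableGeomSeries A] [Algebra R A] {a b : A} {z : R}
    (hza : z ∈ spectrum R a) (hzb : z ∉ spectrum R b) :
    1 ≤ ‖resolvent b z * (a - b)‖ := by
  by_contra! hlt
  refine hza ?_
  rw [spectrum.mem_resolventSet_iff, algebraMap_sub_eq_mul_one_sub_resolvent_mul a hzb]
  exact (spectrum.notMem_iff.mp hzb).mul (isUnit_one_sub_of_norm_lt_one hlt)

lemma cfc_inv_const_sub_eq_resolvent {𝕜 A : Type*} {p : A → Prop} [Field 𝕜] [StarRing 𝕜]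
    [MetricSpace 𝕜] [IsTopologicalRing 𝕜] [ContinuousStar 𝕜] [ContinuousInv₀ 𝕜]
    [TopologicalSpace A] [Ring A] [StarRing A] [Algebra 𝕜 A] [ContinuousFunctionalCalculus 𝕜 A p]
    {b : A} (hb : p b) {z : 𝕜} (hz : z ∉ spectrum 𝕜 b) :
    cfc (fun x ↦ (z - x)⁻¹) b = resolvent b z := by
  have sub_ne_zero_on_spectrum : ∀ x ∈ spectrum 𝕜 b, z - x ≠ 0 := fun x hx ↦
    sub_ne_zero.mpr (ne_of_mem_of_not_mem hx hz).symm
  rw [cfc_inv (fun x ↦ z - x) b sub_ne_zero_on_spectrum, cfc_sub (fun _ ↦ z) (fun x ↦ x) b,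
    cfc_const z b, cfc_id' 𝕜 b, resolvent]

section IsometricFunctionalCalculus

variable {𝕜 A : Type*} {p : A → Prop} [RCLike 𝕜] [NormedRing A] [StarRing A] [NormedAlgebra 𝕜 A]
  [IsometricContinuousFunctionalCalculus 𝕜 A p]

lemma norm_resolvent_le_inv_infDist_spectrum {b : A} (hb : p b) {z : 𝕜} (hz : z ∉ spectrum 𝕜 b) :
    ‖resolvent b z‖ ≤ (Metric.infDist z (spectrum 𝕜 b))⁻¹ := by
  have isClosed_spectrum : IsClosed (spectrum 𝕜 b) :=
    (ContinuousFunctionalCalculus.isCompact_spectrum b).isClosed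
  rw [← cfc_inv_const_sub_eq_resolvent hb hz]
  refine norm_cfc_le (inv_nonneg.mpr Metric.infDist_nonneg) fun x hx ↦ ?_
  rw [norm_inv, ← dist_eq_norm]
  exact inv_anti₀ ((isClosed_spectrum.notMem_iff_infDist_pos ⟨x, hx⟩).mp hz)
    (Metric.infDist_le_dist_of_mem hx)

theorem stmt13_general [HasSummableGeomSeries A] (a : A) {b : A} (hb : p b) {z : 𝕜}
    (hza : z ∈ spectrum 𝕜 a) :
    Metric.infDist z (spectrum 𝕜 b) ≤ ‖a - b‖ := by
  rcases (Metric.infDist_nonneg (x := z) (s := spectrum 𝕜 b)).eq_or_lt with hd | hd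
  · exact hd ▸ norm_nonneg _
  · have hzb : z ∉ spectrum 𝕜 b := fun h ↦ hd.ne' (Metric.infDist_zero_of_mem h)
    rw [← one_le_inv_mul₀ hd]
    calc
      1 ≤ ‖resolvent b z * (a - b)‖ := one_le_norm_resolvent_mul_sub hza hzb
      _ ≤ ‖resolvent b z‖ * ‖a - b‖ := norm_mul_le _ _
      _ ≤ (Metric.infDist z (spectrum 𝕜 b))⁻¹ * ‖a - b‖ := by
        gcongr
        exact norm_resolvent_le_inv_infDist_spectrum hb hzb

end IsometricFunctionalCalculus

theorem stmt13 (H : Type*) [NormedAddCommGroup H] [InnerProductSpace ℂ H]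
    [CompleteSpace H] (A B : H →L[ℂ] H)
    (hA : IsSelfAdjoint A) (hB : IsSelfAdjoint B) :
    ∀ z ∈ spectrum ℂ A, Metric.infDist z (spectrum ℂ B) ≤ ‖A - B‖ := by
  intro z hz
  exact stmt13_general A hB.isStarNormal hz
end
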